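/- In the (1:1) WMaker–WBreaker game on the edge set of K_n (WBreaker moving first), if WMaker plays according to the strategy S, then as long as |U| > 2, after each completed round every edge claimed by WBreaker is incident with some vertex of V(M), i.e., with some vertex already visited by WMaker. -/

import Mathlib

/-!
After round `t` let `U` be the set of vertices unvisited by WMaker. By induction on `t`, no
WBreaker edge lies inside `U`. After round 1 this holds because WMaker starts at `b 1`, an endpoint
of WBreaker's only edge. For the step, WBreaker's next move adds a single edge, so it is the only
edge of his that can lie inside the old `U`. If it does, strategy `S` makes WMaker visit an endpoint
of an edge inside `U`, that is, of this very edge. If it does not, then no edge of his lies inside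
the old `U`, hence none lies inside the smaller new one.
-/

open scoped Classical

/-- The set of edges claimed during the first `t` moves of a walk `w` on the
vertices of `K_n` (`w i` is the position after `i` moves). -/
def claimedEdges {n : ℕ} (w : ℕ → Fin n) (t : ℕ) : Set (Sym2 (Fin n)) :=
  {e | ∃ i, i < t ∧ e = s(w i, w (i + 1))}

/-- The set of vertices visited during the first `t` moves of the walk `w`,
i.e. the vertices incident with at least one of the first `t` claimed edges. -/
def visitedBy {n : ℕ} (w : ℕ → Fin n) (t : ℕ) : Set (Fin n) :=
  {v | ∃ i, i < t ∧ (w i = v ∨ w (i + 1) = v)}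

/-- `unvisited m t` is the set `U` of vertices not yet visited by WMaker after her
first `t` moves. -/
def unvisited {n : ℕ} (m : ℕ → Fin n) (t : ℕ) : Set (Fin n) :=
  (visitedBy m t)ᶜ

/-- `degB b t v` is the degree `d_B(v)` of the vertex `v` in WBreaker's graph after
his first `t` moves. -/
noncomputable def degB {n : ℕ} (b : ℕ → Fin n) (t : ℕ) (v : Fin n) : ℕ :=
  {u : Fin n | s(v, u) ∈ claimedEdges b t}.ncard

/-- `degBIn b t v A` is the degree `d_B(v, A)` of `v` towards the set `A` in
WBreaker's graph after his first `t` moves. -/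
noncomputable def degBIn {n : ℕ} (b : ℕ → Fin n) (t : ℕ) (v : Fin n)
    (A : Set (Fin n)) : ℕ :=
  {u : Fin n | u ∈ A ∧ s(v, u) ∈ claimedEdges b t}.ncard

/-- A legal play of the `(1:1)` WMaker–WBreaker game on `E(K_n)` in which WBreaker
moves first: `b j` (resp. `m j`) is WBreaker's (resp. WMaker's) position after `j`
moves; round `i + 1` consists of WBreaker's move `b i → b (i+1)` followed by WMaker's
move `m i → m (i+1)`.  Each move claims an edge with distinct endpoints, incident with
the player's current position, that has not been claimed by the opponent. -/
def LegalPlay {n : ℕ} (b m : ℕ → Fin n) : Prop :=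
  (∀ i, b i ≠ b (i + 1)) ∧ (∀ i, m i ≠ m (i + 1)) ∧
  (∀ i, s(b i, b (i + 1)) ∉ claimedEdges m i) ∧
  (∀ i, s(m i, m (i + 1)) ∉ claimedEdges b (i + 1))

/-- WMaker's strategy `S`.  She starts at the vertex `b 1` in which WBreaker finished
his first move and claims an edge `v₁u` with `d_B(u) = 0`.  In every later round
(WMaker's `(i+1)`-st move, from her position `w = m i`, after WBreaker's `(i+1)`-st
move): if there is an edge `pq` of WBreaker with both endpoints in `U`, she moves to an
endpoint of such an edge (choosing, whenever the edges to both endpoints are free, an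
endpoint of maximal `d_B`-degree); otherwise, as long as `|U| ≥ 3`, she moves to an
unvisited vertex `u ∈ U`, reachable by a free edge, maximizing `d_B(u)` among such
vertices (if all of these have `d_B(u) = 0` this is an arbitrary free edge `wu`,
`u ∈ U`).  Ties are broken arbitrarily, so `FollowsS` is the predicate that a given
play conforms to some instance of `S`. -/
def FollowsS {n : ℕ} (b m : ℕ → Fin n) : Prop :=
  m 0 = b 1 ∧ degB b 1 (m 1) = 0 ∧
  ∀ i, 1 ≤ i →
    ((∃ p q, p ∈ unvisited m i ∧ q ∈ unvisited m i ∧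
        s(p, q) ∈ claimedEdges b (i + 1)) →
      ∃ q, m (i + 1) ∈ unvisited m i ∧ q ∈ unvisited m i ∧
        s(m (i + 1), q) ∈ claimedEdges b (i + 1) ∧
        (s(m i, q) ∉ claimedEdges b (i + 1) →
          degB b (i + 1) q ≤ degB b (i + 1) (m (i + 1)))) ∧
    ((¬ ∃ p q, p ∈ unvisited m i ∧ q ∈ unvisited m i ∧
        s(p, q) ∈ claimedEdges b (i + 1)) →
      3 ≤ (unvisited m i).ncard →
        m (i + 1) ∈ unvisited m i ∧
        ∀ u ∈ unvisited m i, s(m i, u) ∉ claimedEdges b (i + 1) →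
          degB b (i + 1) u ≤ degB b (i + 1) (m (i + 1)))

theorem claimedEdges_succ {n : ℕ} {w : ℕ → Fin n} {t : ℕ} {e : Sym2 (Fin n)}
    (he : e ∈ claimedEdges w (t + 1)) : e ∈ claimedEdges w t ∨ e = s(w t, w (t + 1)) := by
  obtain ⟨i, hi, rfl⟩ := he
  rcases Nat.lt_succ_iff_lt_or_eq.mp hi with h | rfl
  · exact Or.inl ⟨i, h, rfl⟩
  · exact Or.inr rfl

theorem visitedBy_mono {n : ℕ} {w : ℕ → Fin n} {s t : ℕ} (h : s ≤ t) :
    visitedBy w s ⊆ visitedBy w t := by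
  rintro v ⟨i, hi, hv⟩
  exact ⟨i, hi.trans_le h, hv⟩

/-- The invariant of the induction; it needs no bound on the number of unvisited vertices. -/
theorem exists_visited_mem_of_followsS {n : ℕ} {b m : ℕ → Fin n} (hS : FollowsS b m)
    {t : ℕ} (ht : 1 ≤ t) : ∀ e ∈ claimedEdges b t, ∃ v ∈ visitedBy m t, v ∈ e := by
  obtain ⟨h0, -, hstep⟩ := hS
  induction t, ht using Nat.le_induction with
  | base =>
    rintro e ⟨i, hi, rfl⟩
    obtain rfl : i = 0 := by omega
    exact ⟨b 1, ⟨0, one_pos, Or.inl h0⟩, Sym2.mem_mk_right _ _⟩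
  | succ t ht ih =>
    intro e he
    by_cases hpq : ∃ p q, p ∈ unvisited m t ∧ q ∈ unvisited m t ∧
        s(p, q) ∈ claimedEdges b (t + 1)
    · rcases claimedEdges_succ he with he | rfl
      · obtain ⟨v, hv, hve⟩ := ih e he
        exact ⟨v, visitedBy_mono t.le_succ hv, hve⟩
      · obtain ⟨q, hm, hq, hmq, -⟩ := (hstep t ht).1 hpq
        refine ⟨m (t + 1), ⟨t, t.lt_succ_self, Or.inr rfl⟩, ?_⟩
        -- An edge inside the unvisited set is not an old one, so it is the one just claimed.
        rcases claimedEdges_succ hmq with hold | hnew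
        · obtain ⟨v, hv, hve⟩ := ih _ hold
          rcases Sym2.mem_iff.mp hve with rfl | rfl
          · exact absurd hv hm
          · exact absurd hv hq
        · exact hnew ▸ Sym2.mem_mk_left _ _
    · induction e using Sym2.ind with
      | _ p q =>
        by_cases hp : p ∈ visitedBy m t
        · exact ⟨p, visitedBy_mono t.le_succ hp, Sym2.mem_mk_left _ _⟩
        by_cases hq : q ∈ visitedBy m t
        · exact ⟨q, visitedBy_mono t.le_succ hq, Sym2.mem_mk_right _ _⟩
        exact absurd ⟨p, q, hp, hq, he⟩ hpq

/-- **Lemma 1.**  In the `(1:1)` WMaker–WBreaker game on `E(K_n)` (WBreaker first),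
if WMaker plays according to strategy `S` then, as long as `|U| > 2`, after each
completed round every edge claimed by WBreaker is incident with some vertex already
visited by WMaker. -/
theorem strategyS_breaker_edges_touch_maker {n : ℕ} (b m : ℕ → Fin n)
    (hlegal : LegalPlay b m) (hS : FollowsS b m) :
    ∀ t, 1 ≤ t → 2 < (unvisited m t).ncard →
      ∀ e ∈ claimedEdges b t, ∃ v ∈ visitedBy m t, v ∈ e :=
  fun _ ht _ => exists_visited_mem_of_followsS hS ht
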